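/- Let S = {a,a',b,b'} be a four-letter alphabet with complementation, let V ⊆ S^d be a polybox code, i ∈ [d], and write V^{i,s} = {v ∈ V : v_i = s}. Assume V^{i,a'} ∪ V^{i,b} ∪ V^{i,b'} ≠ ∅ and |V^{i,a'}| + |V^{i,b}| + |V^{i,b'}| ≤ 4, and let W be a nonempty polybox code equivalent to V. Then there exists a code W̄ obtained from W by gluing and cutting such that Δ(V, W̄) ≤ 4. -/

import Mathlib

/- Common framework: polybox codes over a finite alphabet `S` with a
complementation `c : S → S` (an involution without fixed points). -/

namespace PolyboxPaper

variable {S : Type} [Fintype S] [DecidableEq S] {d : ℕ}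

/-- Two words are dichotomous: they differ by complementation at some position. -/
def Dich (c : S → S) (v w : Fin d → S) : Prop := ∃ i, v i = c (w i)

instance (c : S → S) (v w : Fin d → S) : Decidable (Dich c v w) :=
  decidable_of_iff (∃ i, v i = c (w i)) Iff.rfl

/-- A polybox code: every two distinct words are dichotomous. -/
def IsCode (c : S → S) (V : Finset (Fin d → S)) : Prop :=
  ∀ v ∈ V, ∀ w ∈ V, v ≠ w → Dich c v w

/-- A cube tiling code: a polybox code with `2 ^ d` words. -/
def CubeTiling (c : S → S) (V : Finset (Fin d → S)) : Prop :=
  IsCode c V ∧ V.card = 2 ^ d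

/-- `v` and `w` form a twin pair in the `i`-th direction. -/
def TwinPair (c : S → S) (v w : Fin d → S) (i : Fin d) : Prop :=
  v i = c (w i) ∧ ∀ j, j ≠ i → v j = w j

/-- A code is twin pair free if no two of its words form a twin pair. -/
def TwinPairFree (c : S → S) (V : Finset (Fin d → S)) : Prop :=
  ∀ v ∈ V, ∀ w ∈ V, ∀ i, ¬ TwinPair c v w i

/-- A single glue-and-cut operation: a twin pair `v, w` of `V` in the `i`-th
direction is replaced by a twin pair `q, t` in the `i`-th direction agreeing
with `v` (and `w`) at all positions `j ≠ i`. -/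
def GCStep (c : S → S) (V W : Finset (Fin d → S)) : Prop :=
  ∃ (v w q t : Fin d → S) (i : Fin d), v ∈ V ∧ w ∈ V ∧ TwinPair c v w i ∧
    TwinPair c q t i ∧ (∀ j, j ≠ i → q j = v j) ∧ W = (V \ {v, w}) ∪ {q, t}

/-- `W` is obtained from `V` by gluing and cutting (finite, possibly empty,
sequence of single glue-and-cut operations); equivalently, `V` and `W` are
strongly equivalent. -/
def GC (c : S → S) (V W : Finset (Fin d → S)) : Prop :=
  Relation.ReflTransGen (GCStep c) V W

/-- Passing from `V` to `W` by gluing and cutting keeping `Q` fixed: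
every intermediate code contains `Q`. -/
def GCFix (c : S → S) (Q V W : Finset (Fin d → S)) : Prop :=
  Relation.ReflTransGen (fun A B => GCStep c A B ∧ Q ⊆ B) V W

/-- A realization: for each coordinate a map `f i : S → Set (X i)` taking
nonempty proper values and sending complementary letters to complementary sets. -/
def IsRealization (c : S → S) (X : Fin d → Type) (f : ∀ i, S → Set (X i)) : Prop :=
  ∀ i s, (f i s).Nonempty ∧ f i s ≠ Set.univ ∧ f i (c s) = (f i s)ᶜ

/-- The box associated to a word by a realization. -/
def box {X : Fin d → Type} (f : ∀ i, S → Set (X i)) (v : Fin d → S) :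
    Set (∀ i, X i) :=
  {x | ∀ i, x i ∈ f i (v i)}

/-- The word `w` is covered by the code `V` (`w ⊑ V`). -/
def CoveredWord (c : S → S) (w : Fin d → S) (V : Finset (Fin d → S)) : Prop :=
  ∀ (X : Fin d → Type) (f : ∀ i, S → Set (X i)), IsRealization c X f →
    box f w ⊆ ⋃ v ∈ V, box f v

/-- `V ⊑ W`: every word of `V` is covered by `W`. -/
def Covered (c : S → S) (V W : Finset (Fin d → S)) : Prop :=
  ∀ v ∈ V, CoveredWord c v W

/-- Equivalent codes: `V ⊑ W` and `W ⊑ V`. -/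
def Equivalent (c : S → S) (V W : Finset (Fin d → S)) : Prop :=
  Covered c V W ∧ Covered c W V

/-- `V ⊑̇ W`: `V ⊑ W` and no word of `V` belongs to any code obtained from `W`
by gluing and cutting. -/
def DotCovered (c : S → S) (V W : Finset (Fin d → S)) : Prop :=
  Covered c V W ∧ ∀ v ∈ V, ∀ W', GC c W W' → v ∉ W'

/-- The density `δ(V, W)`. -/
noncomputable def delta (c : S → S) (V W : Finset (Fin d → S)) : ℕ∞ :=
  W.inf fun w => ((V.filter fun v => ¬ Dich c v w).card : ℕ∞)

/-- `C` is a minimal cover of the word `w`. -/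
def MinCoverWord (c : S → S) (C : Finset (Fin d → S)) (w : Fin d → S) : Prop :=
  IsCode c C ∧ CoveredWord c w C ∧ ∀ q ∈ C, ¬ Dich c q w

/-- `C` is a minimal cover of the code `P`. -/
def MinCoverCode (c : S → S) (C P : Finset (Fin d → S)) : Prop :=
  IsCode c C ∧ Covered c P C ∧ ∀ q ∈ C, ∃ p ∈ P, ¬ Dich c q p

/-- A simple polybox code. -/
def SimpleCode (c : S → S) (V : Finset (Fin d → S)) : Prop :=
  ∀ i : Fin d, ∃ s : S, ∀ v ∈ V, v i = s ∨ v i = c s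

/-- A simple cube tiling code `{s₁, s₁'} × ⋯ × {s_d, s_d'}`. -/
def SimpleCubeTiling (c : S → S) (U : Finset (Fin d → S)) : Prop :=
  ∃ s : Fin d → S, ∀ v : Fin d → S, v ∈ U ↔ ∀ i, v i = s i ∨ v i = c (s i)

/-- Word whose first four coordinates are `x0 x1 x2 x3` and which agrees with
`r` elsewhere. -/
def specialWord (r : Fin d → S) (x0 x1 x2 x3 : S) : Fin d → S := fun i =>
  if (i : ℕ) = 0 then x0 else if (i : ℕ) = 1 then x1 else if (i : ℕ) = 2 then x2
  else if (i : ℕ) = 3 then x3 else r i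

/-- The special pair of 12-word codes (Theorem 1 of the paper). -/
def SpecialPair (c : S → S) (V W : Finset (Fin d → S)) : Prop :=
  ∃ (a b : S) (r : Fin d → S), a ≠ b ∧ a ≠ c b ∧
    V = {specialWord r a (c a) b (c b), specialWord r a b (c b) a,
         specialWord r a (c b) (c b) (c b), specialWord r (c a) a (c b) (c b),
         specialWord r (c a) (c a) a (c b), specialWord r (c a) b (c b) b,
         specialWord r b a b (c b), specialWord r b b b b,
         specialWord r b (c b) (c a) b, specialWord r (c b) a b (c a),
         specialWord r (c b) (c a) b b, specialWord r (c b) (c b) (c b) b} ∧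
    W = {specialWord r (c a) (c a) (c a) b, specialWord r (c a) b a (c a),
         specialWord r b a (c a) a, specialWord r a (c a) (c a) a,
         specialWord r (c a) a (c a) (c a), specialWord r a b b (c a),
         specialWord r b b a a, specialWord r a (c b) (c a) (c a),
         specialWord r (c b) a (c b) a, specialWord r (c b) (c a) a a,
         specialWord r (c b) (c b) a (c a), specialWord r b (c b) a (c b)}

/-- An isomorphism of `S^d`: a permutation of coordinates followed by
position bijections commuting with complementation. -/
def IsIso (c : S → S) (Φ : (Fin d → S) → Fin d → S) : Prop :=
  ∃ (σ : Equiv.Perm (Fin d)) (h : Fin d → S → S),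
    (∀ i, Function.Bijective (h i)) ∧ (∀ i s, h i (c s) = c (h i s)) ∧
    ∀ v i, Φ v i = h i (v (σ i))

/-- The pair `(V, W)` is, up to isomorphism, the special pair. -/
def SpecialPairUpToIso (c : S → S) (V W : Finset (Fin d → S)) : Prop :=
  ∃ Φ, IsIso c Φ ∧
    (SpecialPair c (V.image Φ) (W.image Φ) ∨ SpecialPair c (W.image Φ) (V.image Φ))

/-! Among all realizations there is a universal one, whose points are selectors: choices of one
letter from every complementary pair. On a line in direction `i` a code has at most two boxes, and
the `i`-th letters of these are complementary.

A cover of a word `v` by at most four words can always be glued and cut into `v`. Two complementary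
letters, both different from `v k`, occur at some position `k`. Either one of them occurs in just
one word `p`; then the words with the complementary letter cover the twin of `p`, and gluing `p`
with that twin and cutting along `v k` gives a cover with fewer words. Or each occurs exactly
twice; then the cover splits into covers of two halves of `v`.

Counting words in slices `x i = σ` shows that for `s ≠ t` at most `|{v ∈ V : v i ≠ t}|` words of `W`
have `i`-th letter `s`. Consider the `i`-th letters. A word of `W` with letter `a'` meets no word of
`V` with letter `a`. If `W` has no letter `a'` and `v ∈ V` has letter `b` or `b'`, then all words of
`W` meeting `v` have the same letter as `v`. If `W` has no letter `a'` and `v ∈ V` has it, then the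
words of `W` with letters `b` and `b'` cover two halves of `v`, so `v` can be glued from them, and
`v` is then the word with letter `a'`. -/

omit [Fintype S] [DecidableEq S]

/-- An alphabet complementation: a fixed-point-free involution. -/
structure IsComplementation (c : S → S) : Prop where
  involutive : Function.Involutive c
  ne_self (s : S) : c s ≠ s

/-- A selector picks exactly one letter out of every complementary pair. Selectors are the points of
the universal realization, which sends a letter to the set of all selectors containing it. -/
def Selector (c : S → S) : Type := {B : Set S // ∀ s, c s ∈ B ↔ s ∉ B}

instance (c : S → S) : Membership S (Selector c) := ⟨fun B s => s ∈ B.1⟩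

instance [Finite S] (c : S → S) : Finite (Selector c) := Subtype.finite

/-- The box of the word `v` in the universal realization. -/
def selectorBox (c : S → S) (v : Fin d → S) : Set (Fin d → Selector c) :=
  box (fun _ s => {B | s ∈ B}) v

/-- The line through the point `x` in direction `i` meets the box of the word `v`. -/
def LineMeets {c : S → S} (i : Fin d) (x : Fin d → Selector c) (v : Fin d → S) : Prop :=
  ∀ j, j ≠ i → v j ∈ x j

/-- The boxes of the words of `C` cover the box of `v` in the universal realization. -/
def Covers (c : S → S) (C : Finset (Fin d → S)) (v : Fin d → S) : Prop :=
  ∀ x ∈ selectorBox c v, ∃ p ∈ C, x ∈ selectorBox c p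

variable {c : S → S} {C C₁ C₂ V W : Finset (Fin d → S)} {p q r v w z : Fin d → S} {i k : Fin d}
  {s t : S} {x : Fin d → Selector c}

section Selectors

theorem Selector.compl_mem_iff (B : Selector c) : c s ∈ B ↔ s ∉ B := B.2 s

theorem exists_selector_superset (hc : IsComplementation c) {T : Set S}
    (hT : ∀ s ∈ T, c s ∉ T) : ∃ B : Selector c, ∀ s ∈ T, s ∈ B := by
  refine ⟨⟨{s | s ∈ T ∨ c s ∉ T ∧ WellOrderingRel s (c s)}, fun s => ?_⟩, fun s hs => Or.inl hs⟩
  have htri : ¬ WellOrderingRel s (c s) ↔ WellOrderingRel (c s) s :=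
    ⟨fun h => (trichotomous_of WellOrderingRel s (c s)).resolve_left h |>.resolve_left
      (hc.ne_self s).symm, asymm_of WellOrderingRel⟩
  have hs := hT s
  simp only [Set.mem_ofPred_eq, hc.involutive s, not_or, not_and, htri]
  tauto

theorem exists_selector_mem_mem (hc : IsComplementation c) (h : s ≠ c t) :
    ∃ B : Selector c, s ∈ B ∧ t ∈ B := by
  have hT : ∀ u ∈ ({s, t} : Set S), c u ∉ ({s, t} : Set S) := by
    have := hc.involutive.eq_iff (x := s) (y := t)
    rintro u (rfl | rfl) <;> simp [hc.ne_self] <;> grind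
  obtain ⟨B, hB⟩ := exists_selector_superset hc hT
  exact ⟨B, hB s (by simp), hB t (by simp)⟩

theorem eq_or_eq_of_forall_selector (hc : IsComplementation c) (hst : s ≠ c t) {u : S}
    (h : ∀ B : Selector c, s ∈ B → t ∈ B → u ∈ B) : u = s ∨ u = t := by
  by_contra! hu
  have hT : ∀ r ∈ ({s, t, c u} : Set S), c r ∉ ({s, t, c u} : Set S) := by
    have := hc.involutive
    have := hc.ne_self
    rintro r (rfl | rfl | rfl) <;> simp <;> grind [Function.Involutive]
  obtain ⟨B, hB⟩ := exists_selector_superset hc hT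
  exact B.compl_mem_iff.1 (hB (c u) (by simp)) (h B (hB s (by simp)) (hB t (by simp)))

/-- The selector of the letters omitted by `B`. This involution exchanges the selectors containing a
given letter with those avoiding it, so each letter lies in half of all selectors. -/
def Selector.compl (B : Selector c) : Selector c := ⟨B.1ᶜ, fun s => not_congr (B.2 s)⟩

theorem Selector.mem_compl {B : Selector c} : s ∈ B.compl ↔ s ∉ B := Iff.rfl

theorem Selector.compl_compl (B : Selector c) : B.compl.compl = B :=
  Subtype.ext (_root_.compl_compl B.1)

theorem two_mul_card_selectors_mem [Fintype (Selector c)] (s : S)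
    [DecidablePred fun B : Selector c => s ∈ B] :
    2 * (Finset.univ.filter fun B : Selector c => s ∈ B).card = Fintype.card (Selector c) := by
  have hcompl : (Finset.univ.filter fun B : Selector c => s ∈ B).card =
      (Finset.univ.filter fun B : Selector c => s ∉ B).card := by
    refine Finset.card_nbij' Selector.compl Selector.compl ?_ ?_ (fun B _ => B.compl_compl)
      (fun B _ => B.compl_compl)
    · intro B hB
      simpa [Selector.mem_compl] using hB
    · intro B hB
      simpa [Selector.mem_compl] using hB
  rw [two_mul]
  nth_rw 2 [hcompl]
  exact Finset.card_filter_add_card_filter_not _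

end Selectors

section Boxes

theorem mem_selectorBox : x ∈ selectorBox c v ↔ ∀ j, v j ∈ x j := Iff.rfl

theorem update_mem_selectorBox {B : Selector c} :
    Function.update x i B ∈ selectorBox c v ↔ LineMeets i x v ∧ v i ∈ B := by
  rw [mem_selectorBox, Function.forall_update_iff x (fun j y => v j ∈ y), and_comm]
  rfl

theorem mem_selectorBox_update :
    x ∈ selectorBox c (Function.update v i s) ↔ LineMeets i x v ∧ s ∈ x i := by
  rw [mem_selectorBox, Function.forall_update_iff v (fun j y => y ∈ x j), and_comm]
  rfl

theorem mem_selectorBox_iff_lineMeets (i : Fin d) :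
    x ∈ selectorBox c v ↔ LineMeets i x v ∧ v i ∈ x i := by
  rw [← mem_selectorBox_update, Function.update_eq_self]

theorem dich_iff_disjoint_selectorBox (hc : IsComplementation c) :
    Dich c v w ↔ Disjoint (selectorBox c v) (selectorBox c w) := by
  refine ⟨fun ⟨j, hj⟩ => Set.disjoint_left.2 fun x hxv hxw => ?_, fun h => ?_⟩
  · exact (x j).compl_mem_iff.1 (hj ▸ hxv j) (hxw j)
  · by_contra hvw
    have hmeet : ∀ j, ∃ B : Selector c, v j ∈ B ∧ w j ∈ B := fun j =>
      exists_selector_mem_mem hc fun hj => hvw ⟨j, hj⟩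
    choose x hxv hxw using hmeet
    exact Set.disjoint_left.1 h (show x ∈ selectorBox c v from hxv) hxw

theorem Dich.symm (hc : IsComplementation c) (h : Dich c v w) : Dich c w v :=
  (dich_iff_disjoint_selectorBox hc).2 ((dich_iff_disjoint_selectorBox hc).1 h).symm

theorem not_dich_of_mem (hc : IsComplementation c) (hv : x ∈ selectorBox c v)
    (hw : x ∈ selectorBox c w) : ¬ Dich c v w := fun h =>
  Set.disjoint_left.1 ((dich_iff_disjoint_selectorBox hc).1 h) hv hw

theorem exists_mem_of_not_dich (hc : IsComplementation c) (h : ¬ Dich c v w) :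
    ∃ x, x ∈ selectorBox c v ∧ x ∈ selectorBox c w :=
  Set.not_disjoint_iff.1 (mt (dich_iff_disjoint_selectorBox hc).2 h)

theorem not_dich_self (hc : IsComplementation c) (v : Fin d → S) : ¬ Dich c v v :=
  fun ⟨j, hj⟩ => hc.ne_self (v j) hj.symm

theorem selectorBox_nonempty (hc : IsComplementation c) (v : Fin d → S) :
    (selectorBox c v).Nonempty :=
  (exists_mem_of_not_dich hc (not_dich_self hc v)).imp fun _ => And.left

theorem IsCode.eq_compl_of_lineMeets (hC : IsCode c C)
    (hp : p ∈ C) (hq : q ∈ C) (hpq : p ≠ q) (hxp : LineMeets i x p) (hxq : LineMeets i x q) :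
    p i = c (q i) := by
  obtain ⟨j, hj⟩ := hC p hp q hq hpq
  obtain rfl : j = i := by
    by_contra hji
    exact (x j).compl_mem_iff.1 (hj ▸ hxp j hji) (hxq j hji)
  exact hj

theorem IsCode.exists_lineMeets_compl (hC : IsCode c C)
    (hp : p ∈ C) (hxp : LineMeets i x p) {B : Selector c} (hpB : p i ∉ B)
    (hB : ∃ q ∈ C, Function.update x i B ∈ selectorBox c q) :
    ∃ q ∈ C, LineMeets i x q ∧ q i = c (p i) := by
  obtain ⟨q, hq, hxq⟩ := hB
  obtain ⟨hxq, hqB⟩ := update_mem_selectorBox.1 hxq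
  have hqp : q ≠ p := fun h => hpB (h ▸ hqB)
  exact ⟨q, hq, hxq, hC.eq_compl_of_lineMeets hq hp hqp hxq hxp⟩

theorem IsCode.mono (hC : IsCode c C) (h : C₁ ⊆ C) : IsCode c C₁ :=
  fun v hv w hw => hC v (h hv) w (h hw)

end Boxes

section Covers

theorem CoveredWord.covers (hc : IsComplementation c) (h : CoveredWord c v C) : Covers c C v := by
  have hreal : IsRealization c (fun _ : Fin d => Selector c) fun _ s => {B | s ∈ B} := by
    refine fun _ s => ⟨?_, fun huniv => ?_, Set.ext fun B => B.compl_mem_iff⟩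
    · obtain ⟨B, hB, -⟩ := exists_selector_mem_mem hc (hc.ne_self s).symm
      exact ⟨B, hB⟩
    · obtain ⟨B, hB, -⟩ := exists_selector_mem_mem hc (hc.ne_self (c s)).symm
      exact B.compl_mem_iff.1 hB (Set.eq_univ_iff_forall.1 huniv B)
  intro x hx
  obtain ⟨p, hp, hxp⟩ := Set.mem_iUnion₂.1 (h _ _ hreal hx)
  exact ⟨p, hp, hxp⟩

theorem Covers.filter_not_dich [DecidableEq S] (hc : IsComplementation c) (h : Covers c C v) :
    Covers c (C.filter fun p => ¬ Dich c p v) v := by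
  intro x hx
  obtain ⟨p, hp, hxp⟩ := h x hx
  exact ⟨p, Finset.mem_filter.2 ⟨hp, not_dich_of_mem hc hxp hx⟩, hxp⟩

theorem Covers.dich (hc : IsComplementation c) (h : Covers c C v)
    (hr : ∀ p ∈ C, Dich c r p) : Dich c r v := by
  by_contra hrv
  obtain ⟨x, hxr, hxv⟩ := exists_mem_of_not_dich hc hrv
  obtain ⟨p, hp, hxp⟩ := h x hxv
  exact not_dich_of_mem hc hxr hxp (hr p hp)

theorem Covers.mem_of_isCode (hc : IsComplementation c) (h : Covers c C₁ v) (hC : IsCode c C)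
    (hC₁ : C₁ ⊆ C) (hv : v ∈ C) : v ∈ C₁ := by
  by_contra hvC₁
  exact not_dich_self hc v <| h.dich hc fun p hp =>
    hC v hv p (hC₁ hp) fun h => hvC₁ (h ▸ hp)

theorem Covers.nonempty (hc : IsComplementation c) (h : Covers c C v) : C.Nonempty := by
  obtain ⟨x, hx⟩ := selectorBox_nonempty hc v
  obtain ⟨p, hp, -⟩ := h x hx
  exact ⟨p, hp⟩

theorem Covers.filter_update [DecidableEq S] (h : Covers c C v) {B : Selector c} (hvB : v i ∈ B)
    (hs : ∀ p ∈ C, p i ∈ B → p i = s) :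
    Covers c (C.filter fun p => p i = s) (Function.update v i s) := by
  intro x hx
  obtain ⟨hxv, hxs⟩ := mem_selectorBox_update.1 hx
  obtain ⟨p, hp, hxp⟩ := h (Function.update x i B) (update_mem_selectorBox.2 ⟨hxv, hvB⟩)
  obtain ⟨hxp, hpB⟩ := update_mem_selectorBox.1 hxp
  have hps := hs p hp hpB
  exact ⟨p, Finset.mem_filter.2 ⟨hp, hps⟩, (mem_selectorBox_iff_lineMeets i).2 ⟨hxp, hps ▸ hxs⟩⟩

theorem Covers.union_of_halves [DecidableEq S] (h₁ : Covers c C₁ (Function.update z i s))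
    (h₂ : Covers c C₂ (Function.update z i (c s))) : Covers c (C₁ ∪ C₂) z := by
  intro x hx
  have hxz := ((mem_selectorBox_iff_lineMeets i).1 hx).1
  by_cases hs : s ∈ x i
  · obtain ⟨p, hp, hxp⟩ := h₁ x (mem_selectorBox_update.2 ⟨hxz, hs⟩)
    exact ⟨p, Finset.mem_union_left _ hp, hxp⟩
  · obtain ⟨p, hp, hxp⟩ := h₂ x (mem_selectorBox_update.2 ⟨hxz, (x i).compl_mem_iff.2 hs⟩)
    exact ⟨p, Finset.mem_union_right _ hp, hxp⟩

theorem Covers.trans_sdiff_union [DecidableEq S] (h₁ : Covers c C₁ z) (hC₁ : C₁ ⊆ C)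
    (h : Covers c (C \ C₁ ∪ {z}) v) : Covers c C v := by
  intro x hx
  obtain ⟨p, hp, hxp⟩ := h x hx
  rcases Finset.mem_union.1 hp with hpC | hpz
  · exact ⟨p, (Finset.mem_sdiff.1 hpC).1, hxp⟩
  · obtain ⟨q, hq, hxq⟩ := h₁ x (Finset.mem_singleton.1 hpz ▸ hxp)
    exact ⟨q, hC₁ hq, hxq⟩

theorem IsCode.sdiff_union [DecidableEq S] (hc : IsComplementation c) (hC : IsCode c C)
    (hC₁ : C₁ ⊆ C) (hC₂ : IsCode c C₂) (h : ∀ z ∈ C₂, Covers c C₁ z) :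
    IsCode c (C \ C₁ ∪ C₂) := by
  have hdich : ∀ r ∈ C \ C₁, ∀ z ∈ C₂, Dich c r z := fun r hr z hz => by
    obtain ⟨hrC, hrC₁⟩ := Finset.mem_sdiff.1 hr
    exact (h z hz).dich hc fun p hp => hC r hrC p (hC₁ hp) fun hrp => hrC₁ (hrp ▸ hp)
  intro v hv w hw hvw
  rcases Finset.mem_union.1 hv with hvC | hvC₂ <;> rcases Finset.mem_union.1 hw with hwC | hwC₂
  · exact hC.mono Finset.sdiff_subset v hvC w hwC hvw
  · exact hdich v hvC w hwC₂
  · exact (hdich w hwC v hvC₂).symm hc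
  · exact hC₂ v hvC₂ w hwC₂ hvw

theorem isCode_singleton (v : Fin d → S) : IsCode c {v} := fun _ hp _ hq hpq =>
  absurd ((Finset.mem_singleton.1 hp).trans (Finset.mem_singleton.1 hq).symm) hpq

end Covers

section Counting

/-- The points `x` with `x i = σ` that lie in the box of `p` in all directions other than `i`. If
`p i ∈ σ`, these are the points of the box of `p` with `x i = σ`. All slices have the same size,
which turns covering relations into inequalities between numbers of words. -/
noncomputable def slice [Fintype (Selector c)] (i : Fin d) (σ : Selector c) (p : Fin d → S) :
    Finset (Fin d → Selector c) := by
  classical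
  exact Fintype.piFinset
    (Function.update (fun j => Finset.univ.filter fun B : Selector c => p j ∈ B) i {σ})

theorem mem_slice [Fintype (Selector c)] {σ : Selector c} :
    x ∈ slice i σ p ↔ LineMeets i x p ∧ x i = σ := by
  classical
  rw [slice, Fintype.mem_piFinset, Function.forall_update_iff _ (fun j Y => x j ∈ Y), and_comm]
  simp [LineMeets]

theorem card_slice_pos [Fintype (Selector c)] (hc : IsComplementation c) (i : Fin d)
    (σ : Selector c) (p : Fin d → S) : 0 < (slice i σ p).card := by
  classical
  obtain ⟨x, hx⟩ := selectorBox_nonempty hc p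
  refine Finset.card_pos.2 ⟨Function.update x i σ, mem_slice.2 ⟨fun j hj => ?_, by simp⟩⟩
  rw [Function.update_of_ne hj]
  exact hx j

theorem card_slice_eq [Fintype (Selector c)] (i : Fin d) (σ : Selector c) (p q : Fin d → S) :
    (slice i σ p).card = (slice i σ q).card := by
  classical
  rw [slice, slice, Fintype.card_piFinset, Fintype.card_piFinset]
  refine Finset.prod_congr rfl fun j _ => ?_
  rcases eq_or_ne j i with rfl | hj
  · simp
  · have hp := two_mul_card_selectors_mem (c := c) (p j)
    have hq := two_mul_card_selectors_mem (c := c) (q j)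
    rw [Function.update_of_ne hj, Function.update_of_ne hj]
    lia

theorem IsCode.card_filter_mem_le [Finite S] (hc : IsComplementation c) (hW : IsCode c W)
    (hWV : ∀ w ∈ W, Covers c V w) (i : Fin d) (σ : Selector c) [DecidablePred (· ∈ σ)] :
    (W.filter fun w => w i ∈ σ).card ≤ (V.filter fun v => v i ∈ σ).card := by
  classical
  have := Fintype.ofFinite (Selector c)
  rcases W.eq_empty_or_nonempty with rfl | ⟨w₀, -⟩
  · simp
  have hdisj : ∀ p ∈ W.filter fun w => w i ∈ σ, ∀ q ∈ W.filter fun w => w i ∈ σ, p ≠ q →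
      Disjoint (slice i σ p) (slice i σ q) := by
    intro p hp q hq hpq
    obtain ⟨hp, hpσ⟩ := Finset.mem_filter.1 hp
    obtain ⟨hq, hqσ⟩ := Finset.mem_filter.1 hq
    refine Finset.disjoint_left.2 fun x hxp hxq => ?_
    have h := hW.eq_compl_of_lineMeets hp hq hpq (mem_slice.1 hxp).1 (mem_slice.1 hxq).1
    exact σ.compl_mem_iff.1 (h ▸ hpσ) hqσ
  have hsub : (W.filter fun w => w i ∈ σ).biUnion (slice i σ) ⊆
      (V.filter fun v => v i ∈ σ).biUnion (slice i σ) := by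
    intro x hx
    obtain ⟨w, hw, hxw⟩ := Finset.mem_biUnion.1 hx
    obtain ⟨hwW, hwσ⟩ := Finset.mem_filter.1 hw
    obtain ⟨hxline, rfl⟩ := mem_slice.1 hxw
    obtain ⟨v, hv, hxv⟩ := hWV w hwW x ((mem_selectorBox_iff_lineMeets i).2 ⟨hxline, hwσ⟩)
    obtain ⟨hxline, hvσ⟩ := (mem_selectorBox_iff_lineMeets i).1 hxv
    exact Finset.mem_biUnion.2 ⟨v, Finset.mem_filter.2 ⟨hv, hvσ⟩, mem_slice.2 ⟨hxline, rfl⟩⟩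
  refine Nat.le_of_mul_le_mul_right ?_ (card_slice_pos hc i σ w₀)
  calc (W.filter fun w => w i ∈ σ).card * (slice i σ w₀).card
      = ((W.filter fun w => w i ∈ σ).biUnion (slice i σ)).card := by
        rw [Finset.card_biUnion hdisj,
          Finset.sum_const_nat fun p _ => card_slice_eq i σ p w₀]
    _ ≤ ((V.filter fun v => v i ∈ σ).biUnion (slice i σ)).card := Finset.card_le_card hsub
    _ ≤ (V.filter fun v => v i ∈ σ).card * (slice i σ w₀).card :=
        Finset.card_biUnion_le_card_mul _ _ _ fun p _ => (card_slice_eq i σ p w₀).le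

theorem IsCode.card_filter_eq_le [Finite S] [DecidableEq S] (hc : IsComplementation c)
    (hW : IsCode c W) (hWV : ∀ w ∈ W, Covers c V w) (i : Fin d) (hst : s ≠ t) :
    (W.filter fun w => w i = s).card ≤ (V.filter fun v => v i ≠ t).card := by
  classical
  obtain ⟨σ, hsσ, htσ⟩ := exists_selector_mem_mem hc (s := s) (t := c t)
    (by rwa [hc.involutive t])
  calc (W.filter fun w => w i = s).card
      ≤ (W.filter fun w => w i ∈ σ).card :=
        Finset.card_le_card (Finset.monotone_filter_right W fun w _ hw => hw ▸ hsσ)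
    _ ≤ (V.filter fun v => v i ∈ σ).card := hW.card_filter_mem_le hc hWV i σ
    _ ≤ (V.filter fun v => v i ≠ t).card :=
        Finset.card_le_card (Finset.monotone_filter_right V fun v _ hv hvt =>
          σ.compl_mem_iff.1 htσ (hvt ▸ hv))

end Counting

section Gluing

variable [DecidableEq S]

theorem TwinPair.covers (h : TwinPair c v w i)
    (hq : ∀ j, j ≠ i → q j = v j) : Covers c {v, w} q := by
  intro x hx
  have hxv : LineMeets i x v := fun j hj => hq j hj ▸ hx j
  by_cases hw : w i ∈ x i
  · have hxw : LineMeets i x w := fun j hj => h.2 j hj ▸ hxv j hj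
    exact ⟨w, by simp, (mem_selectorBox_iff_lineMeets i).2 ⟨hxw, hw⟩⟩
  · have hv : v i ∈ x i := h.1 ▸ (x i).compl_mem_iff.2 hw
    exact ⟨v, by simp, (mem_selectorBox_iff_lineMeets i).2 ⟨hxv, hv⟩⟩

theorem TwinPair.isCode (hc : IsComplementation c) (h : TwinPair c v w i) : IsCode c {v, w} := by
  have hvw : Dich c v w := ⟨i, h.1⟩
  intro p hp q hq hpq
  simp only [Finset.mem_insert, Finset.mem_singleton] at hp hq
  rcases hp with rfl | rfl <;> rcases hq with rfl | rfl
  · exact absurd rfl hpq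
  · exact hvw
  · exact hvw.symm hc
  · exact absurd rfl hpq

theorem IsCode.of_gcStep (hc : IsComplementation c) (hV : IsCode c V) (h : GCStep c V W) :
    IsCode c W := by
  obtain ⟨v, w, q, t, i, hv, hw, hvw, hqt, hqv, rfl⟩ := h
  refine hV.sdiff_union hc (Finset.insert_subset hv (Finset.singleton_subset_iff.2 hw))
    (hqt.isCode hc) fun z hz => hvw.covers fun j hj => ?_
  rcases Finset.mem_insert.1 hz with rfl | hzt
  · exact hqv j hj
  · rw [Finset.mem_singleton.1 hzt, ← hqt.2 j hj, hqv j hj]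

theorem IsCode.of_gc (hc : IsComplementation c) (hV : IsCode c V) (h : GC c V W) :
    IsCode c W := by
  induction h with
  | refl => exact hV
  | tail _ hstep ih => exact ih.of_gcStep hc hstep

/-- The words of `C` can be glued and cut into `v`: they cover `v`, and in every code containing `C`
gluing and cutting produces `v` while leaving the words outside `C` untouched. -/
structure GluesTo (c : S → S) (C : Finset (Fin d → S)) (v : Fin d → S) : Prop where
  covers : Covers c C v
  exists_gc (P : Finset (Fin d → S)) (hP : IsCode c P) (hCP : C ⊆ P) :
    ∃ P', GC c P P' ∧ v ∈ P' ∧ P \ C ⊆ P'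

theorem GluesTo.of_mem (hv : v ∈ C) : GluesTo c C v where
  covers _ hx := ⟨v, hv, hx⟩
  exists_gc P _ hCP := ⟨P, Relation.ReflTransGen.refl, hCP hv, Finset.sdiff_subset⟩

theorem GluesTo.mono (h : GluesTo c C₁ v) (hC₁ : C₁ ⊆ C) : GluesTo c C v where
  covers x hx := (h.covers x hx).imp fun _ hp => ⟨hC₁ hp.1, hp.2⟩
  exists_gc P hP hCP := by
    obtain ⟨P', hPP', hv, hsub⟩ := h.exists_gc P hP (hC₁.trans hCP)
    exact ⟨P', hPP', hv, (Finset.sdiff_subset_sdiff subset_rfl hC₁).trans hsub⟩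

theorem GluesTo.trans (hc : IsComplementation c) (h₁ : GluesTo c C₁ z) (hC₁ : C₁ ⊆ C)
    (h : GluesTo c (C \ C₁ ∪ {z}) v) : GluesTo c C v where
  covers := h₁.covers.trans_sdiff_union hC₁ h.covers
  exists_gc P hP hCP := by
    obtain ⟨P₁, hPP₁, hz, hsub₁⟩ := h₁.exists_gc P hP (hC₁.trans hCP)
    have hCP₁ : C \ C₁ ∪ {z} ⊆ P₁ := Finset.union_subset
      ((Finset.sdiff_subset_sdiff hCP subset_rfl).trans hsub₁) (Finset.singleton_subset_iff.2 hz)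
    obtain ⟨P₂, hPP₂, hv, hsub₂⟩ := h.exists_gc P₁ (hP.of_gc hc hPP₁) hCP₁
    refine ⟨P₂, Relation.ReflTransGen.trans hPP₁ hPP₂, hv, fun r hr => hsub₂ ?_⟩
    obtain ⟨hrP, hrC⟩ := Finset.mem_sdiff.1 hr
    have hrC₁ : r ∉ C₁ := fun h => hrC (hC₁ h)
    have hrz : r ≠ z := by
      rintro rfl
      exact hrC₁ (h₁.covers.mem_of_isCode hc hP (hC₁.trans hCP) hrP)
    have hrP₁ : r ∈ P₁ := hsub₁ (Finset.mem_sdiff.2 ⟨hrP, hrC₁⟩)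
    simp [hrP₁, hrC, hrz]

theorem gcStep_of_update_mem (hc : IsComplementation c) (h₁ : Function.update z i s ∈ V)
    (h₂ : Function.update z i (c s) ∈ V) :
    GCStep c V (V \ {Function.update z i s, Function.update z i (c s)} ∪
      {z, Function.update z i (c (z i))}) := by
  refine ⟨_, _, _, _, i, h₁, h₂, ⟨?_, fun j hj => ?_⟩, ⟨?_, fun j hj => ?_⟩, fun j hj => ?_, rfl⟩
  · simp [hc.involutive s]
  · simp [hj]
  · simp [hc.involutive (z i)]
  · simp [hj]
  · simp [hj]

theorem GluesTo.of_halves (hc : IsComplementation c)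
    (h₁ : GluesTo c C₁ (Function.update z i s)) (h₂ : GluesTo c C₂ (Function.update z i (c s)))
    (hdisj : Disjoint C₁ C₂) : GluesTo c (C₁ ∪ C₂) z where
  covers := h₁.covers.union_of_halves h₂.covers
  exists_gc P hP hCP := by
    have hC₁P := Finset.union_subset_left hCP
    have hC₂P := Finset.union_subset_right hCP
    obtain ⟨P₁, hPP₁, hz₁, hsub₁⟩ := h₁.exists_gc P hP hC₁P
    have hP₁ := hP.of_gc hc hPP₁
    have hC₂P₁ : C₂ ⊆ P₁ :=
      (Finset.subset_sdiff.2 ⟨hC₂P, hdisj.symm⟩).trans hsub₁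
    obtain ⟨P₂, hPP₂, hz₂, hsub₂⟩ := h₂.exists_gc P₁ hP₁ hC₂P₁
    have hz₁C₂ : Function.update z i s ∉ C₂ := fun h =>
      Finset.disjoint_left.1 hdisj (h₁.covers.mem_of_isCode hc hP hC₁P (hC₂P h)) h
    have hz₁P₂ : Function.update z i s ∈ P₂ := hsub₂ (Finset.mem_sdiff.2 ⟨hz₁, hz₁C₂⟩)
    refine ⟨_, (Relation.ReflTransGen.trans hPP₁ hPP₂).tail (gcStep_of_update_mem hc hz₁P₂ hz₂),
      by simp, fun r hr => Finset.mem_union_left _ ?_⟩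
    obtain ⟨hrP, hrC⟩ := Finset.mem_sdiff.1 hr
    obtain ⟨hrC₁, hrC₂⟩ : r ∉ C₁ ∧ r ∉ C₂ := by simpa using hrC
    have hrz₁ : r ≠ Function.update z i s := by
      rintro rfl
      exact hrC₁ (h₁.covers.mem_of_isCode hc hP hC₁P hrP)
    have hrz₂ : r ≠ Function.update z i (c s) := by
      rintro rfl
      exact hrC₂ (h₂.covers.mem_of_isCode hc hP hC₂P hrP)
    have hrP₁ : r ∈ P₁ := hsub₁ (Finset.mem_sdiff.2 ⟨hrP, hrC₁⟩)
    have hrP₂ : r ∈ P₂ := hsub₂ (Finset.mem_sdiff.2 ⟨hrP₁, hrC₂⟩)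
    simp [hrP₂, hrz₁, hrz₂]

end Gluing

section SmallCovers

theorem card_sdiff_union_singleton_lt {α : Type*} [DecidableEq α] {A B : Finset α} (a : α)
    (hAB : A ⊆ B) (hA : 1 < A.card) : (B \ A ∪ {a}).card < B.card := by
  have hunion := Finset.card_union_le (B \ A) {a}
  have hsdiff := Finset.card_sdiff_add_card_eq_card hAB
  rw [Finset.card_singleton] at hunion
  lia

theorem forall_eq_or_eq_of_card_le_four {α β : Type*} [DecidableEq β] {A : Finset α} {f : α → β}
    {y z : β} (hA : A.card ≤ 4) (hyz : y ≠ z)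
    (hy : 1 < (A.filter fun a => f a = y).card) (hz : 1 < (A.filter fun a => f a = z).card) :
    ∀ a ∈ A, f a = y ∨ f a = z := by
  classical
  have hdisj : Disjoint (A.filter fun a => f a = y) (A.filter fun a => f a = z) :=
    Finset.disjoint_filter.2 fun a _ h h' => hyz (h ▸ h')
  have hcard : A.card ≤ (A.filter fun a => f a = y ∨ f a = z).card := by
    rw [Finset.filter_or, Finset.card_union_of_disjoint hdisj]
    lia
  exact Finset.filter_eq_self.1 (Finset.eq_of_subset_of_card_le (Finset.filter_subset _ _) hcard)

theorem eq_or_eq_of_forall_lineMeets (hc : IsComplementation c) (hrv : ¬ Dich c r v)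
    (h : ∀ x ∈ selectorBox c v, x ∈ selectorBox c r → LineMeets k x p) {j : Fin d} (hj : j ≠ k) :
    p j = r j ∨ p j = v j := by
  obtain ⟨x, hxr, hxv⟩ := exists_mem_of_not_dich hc hrv
  refine eq_or_eq_of_forall_selector hc (fun h => hrv ⟨j, h⟩) fun B hrB hvB => ?_
  have hline := h (Function.update x j B)
    (update_mem_selectorBox.2 ⟨fun l _ => hxv l, hvB⟩)
    (update_mem_selectorBox.2 ⟨fun l _ => hxr l, hrB⟩) j hj
  simpa using hline

/-- On each line in direction `k` through the box of `v`, a word with letter `c (p k)` is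
accompanied by a word with letter `p k`, which can only be `p`. -/
theorem IsCode.lineMeets_of_forall_eq (hc : IsComplementation c) (hC : IsCode c C)
    (hcov : Covers c C v) (hpv : ¬ Dich c p v) (huniq : ∀ r ∈ C, r k = p k → r = p)
    (hr : r ∈ C) (hrk : r k = c (p k)) (hx : x ∈ selectorBox c v) (hxr : LineMeets k x r) :
    LineMeets k x p := by
  obtain ⟨B, hpB, hvB⟩ := exists_selector_mem_mem hc fun h => hpv ⟨k, h⟩
  have hrB : r k ∉ B := by rwa [hrk, B.compl_mem_iff, not_not]
  obtain ⟨q, hq, hxq, hqk⟩ := hC.exists_lineMeets_compl hr hxr hrB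
    (hcov _ (update_mem_selectorBox.2 ⟨fun j _ => hx j, hvB⟩))
  rw [hrk, hc.involutive] at hqk
  exact huniq q hq hqk ▸ hxq

theorem IsCode.exists_lineMeets_compl_of_covers (hc : IsComplementation c) (hC : IsCode c C)
    (hcov : Covers c C v) (hp : p ∈ C) (hpk : p k ≠ v k) (hxp : LineMeets k x p)
    (hxv : LineMeets k x v) : ∃ q ∈ C, LineMeets k x q ∧ q k = c (p k) := by
  obtain ⟨B, hpB, hvB⟩ := exists_selector_mem_mem hc (s := c (p k)) (t := v k)
    (hc.involutive.injective.ne hpk)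
  exact hC.exists_lineMeets_compl hp hxp (B.compl_mem_iff.1 hpB)
    (hcov _ (update_mem_selectorBox.2 ⟨hxv, hvB⟩))

variable [DecidableEq S]

theorem IsCode.covers_update_compl_of_forall_eq (hc : IsComplementation c) (hC : IsCode c C)
    (hcov : Covers c C v) (hnd : ∀ r ∈ C, ¬ Dich c r v) (hp : p ∈ C) (hpv : p k ≠ v k)
    (huniq : ∀ r ∈ C, r k = p k → r = p) :
    Covers c (C.filter fun r => r k = c (p k)) (Function.update p k (c (p k))) := by
  intro y hy
  obtain ⟨hyp, hyk⟩ := mem_selectorBox_update.1 hy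
  -- Off `k`, replace `y j` by a selector containing `v j` wherever `p j ≠ v j`.
  have hx : ∀ j, ∃ B : Selector c, p j ∈ B ∧ v j ∈ B ∧ (p j = v j → j ≠ k → B = y j) := by
    intro j
    by_cases hj : p j = v j ∧ j ≠ k
    · exact ⟨y j, hyp j hj.2, hj.1 ▸ hyp j hj.2, fun _ _ => rfl⟩
    · obtain ⟨B, hpB, hvB⟩ := exists_selector_mem_mem hc fun h => hnd p hp ⟨j, h⟩
      exact ⟨B, hpB, hvB, fun h h' => absurd ⟨h, h'⟩ hj⟩
  choose x hxp hxv hxy using hx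
  obtain ⟨r, hr, hxr, hrk⟩ := hC.exists_lineMeets_compl_of_covers hc hcov hp hpv
    (fun j _ => hxp j) fun j _ => hxv j
  refine ⟨r, Finset.mem_filter.2 ⟨hr, hrk⟩,
    (mem_selectorBox_iff_lineMeets k).2 ⟨fun j hj => ?_, hrk ▸ hyk⟩⟩
  by_cases hpj : p j = v j
  · exact hxy j hpj hj ▸ hxr j hj
  · have hpr : p j = r j := (eq_or_eq_of_forall_lineMeets hc (hnd r hr)
      (fun x hxv hxr => hC.lineMeets_of_forall_eq hc hcov (hnd p hp) huniq hr hrk hxv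
        fun l _ => hxr l) hj).resolve_right hpj
    exact hpr ▸ hyp j hj

theorem IsCode.covers_sdiff_union_of_forall_eq (hc : IsComplementation c) (hC : IsCode c C)
    (hcov : Covers c C v) (hpv : ¬ Dich c p v) (huniq : ∀ r ∈ C, r k = p k → r = p)
    (hC₁ : ∀ r ∈ C₁, r = p ∨ r k = c (p k)) :
    Covers c (C \ C₁ ∪ {Function.update p k (v k)}) v := by
  intro x hx
  obtain ⟨r, hr, hxr⟩ := hcov x hx
  by_cases hrC₁ : r ∈ C₁
  · have hxp : LineMeets k x p := by
      rcases hC₁ r hrC₁ with rfl | hrk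
      · exact fun j _ => hxr j
      · exact hC.lineMeets_of_forall_eq hc hcov hpv huniq hr hrk hx fun j _ => hxr j
    exact ⟨_, Finset.mem_union_right _ (Finset.mem_singleton_self _),
      mem_selectorBox_update.2 ⟨hxp, hx k⟩⟩
  · exact ⟨r, Finset.mem_union_left _ (Finset.mem_sdiff.2 ⟨hr, hrC₁⟩), hxr⟩

theorem IsCode.gluesTo_of_forall_eq (hc : IsComplementation c) (hC : IsCode c C)
    (hcov : Covers c C v) (hnd : ∀ r ∈ C, ¬ Dich c r v) (hp : p ∈ C) (hpv : p k ≠ v k)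
    (huniq : ∀ r ∈ C, r k = p k → r = p)
    (ih : ∀ (D : Finset (Fin d → S)) (u : Fin d → S), D.card < C.card → IsCode c D →
      Covers c D u → GluesTo c D u) : GluesTo c C v := by
  set C₁ := C.filter fun r => r k = c (p k)
  have hC₁ : ∀ r ∈ C₁, r k = c (p k) := fun r hr => (Finset.mem_filter.1 hr).2
  have hcov₁ : Covers c C₁ (Function.update p k (c (p k))) :=
    hC.covers_update_compl_of_forall_eq hc hcov hnd hp hpv huniq
  have hC₁C : C₁ ⊂ C := Finset.filter_ssubset.2 ⟨p, hp, fun h => hc.ne_self _ h.symm⟩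
  have hpC₁ : Disjoint {p} C₁ := Finset.disjoint_singleton_left.2 fun h =>
    hc.ne_self _ (hC₁ p h).symm
  have hsub : {p} ∪ C₁ ⊆ C :=
    Finset.union_subset (Finset.singleton_subset_iff.2 hp) hC₁C.subset
  have hglue : GluesTo c ({p} ∪ C₁) (Function.update p k (v k)) := by
    refine GluesTo.of_halves (i := k) (s := p k) hc (GluesTo.of_mem (by simp)) ?_ hpC₁
    rw [Function.update_idem]
    exact ih _ _ (Finset.card_lt_card hC₁C) (hC.mono hC₁C.subset) hcov₁
  refine hglue.trans hc hsub (ih _ _ (card_sdiff_union_singleton_lt _ hsub ?_) ?_ ?_)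
  · have hpos := (hcov₁.nonempty hc).card_pos
    rw [Finset.card_union_of_disjoint hpC₁, Finset.card_singleton]
    lia
  · exact hC.sdiff_union hc hsub (isCode_singleton _) fun u hu =>
      Finset.mem_singleton.1 hu ▸ hglue.covers
  · refine hC.covers_sdiff_union_of_forall_eq hc hcov (hnd p hp) huniq fun r hr => ?_
    simp only [Finset.mem_union, Finset.mem_singleton] at hr
    exact hr.imp_right (hC₁ r)

theorem IsCode.gluesTo_of_forall_eq_or_eq_compl (hc : IsComplementation c) (hC : IsCode c C)
    (hcov : Covers c C v) (hsv : s ≠ v k) (hsv' : s ≠ c (v k)) (hs : ∀ r ∈ C, r k = s ∨ r k = c s)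
    (ih : ∀ (D : Finset (Fin d → S)) (u : Fin d → S), D.card < C.card → IsCode c D →
      Covers c D u → GluesTo c D u) : GluesTo c C v := by
  have hhalf : ∀ t, t ≠ c (v k) → (∀ r ∈ C, r k = t ∨ r k = c t) →
      Covers c (C.filter fun r => r k = t) (Function.update v k t) := by
    intro t htv ht
    obtain ⟨B, htB, hvB⟩ := exists_selector_mem_mem hc htv
    exact hcov.filter_update hvB fun r hr hrB => (ht r hr).resolve_right fun h =>
      B.compl_mem_iff.1 (h ▸ hrB) htB
  have hcov₁ := hhalf s hsv' hs
  have hcov₂ := hhalf (c s) (hc.involutive.injective.ne hsv) (by simpa [hc.involutive s, or_comm])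
  obtain ⟨q₁, hq₁⟩ := hcov₁.nonempty hc
  obtain ⟨q₂, hq₂⟩ := hcov₂.nonempty hc
  rw [Finset.mem_filter] at hq₁ hq₂
  have hlt₁ : (C.filter fun r => r k = s) ⊂ C :=
    Finset.filter_ssubset.2 ⟨q₂, hq₂.1, hq₂.2 ▸ hc.ne_self s⟩
  have hlt₂ : (C.filter fun r => r k = c s) ⊂ C :=
    Finset.filter_ssubset.2 ⟨q₁, hq₁.1, hq₁.2 ▸ (hc.ne_self s).symm⟩
  have hglue₁ := ih _ _ (Finset.card_lt_card hlt₁) (hC.mono hlt₁.subset) hcov₁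
  have hglue₂ := ih _ _ (Finset.card_lt_card hlt₂) (hC.mono hlt₂.subset) hcov₂
  refine (hglue₁.of_halves hc hglue₂ ?_).mono (Finset.union_subset hlt₁.subset hlt₂.subset)
  exact Finset.disjoint_filter.2 fun r _ h h' => hc.ne_self s (h' ▸ h)

theorem IsCode.gluesTo_of_card_le_four (hc : IsComplementation c) (hC : IsCode c C)
    (hcov : Covers c C v) (hcard : C.card ≤ 4) : GluesTo c C v := by
  induction hn : C.card using Nat.strong_induction_on generalizing C v with
  | _ n ih =>
    subst hn
    by_cases hvC : v ∈ C
    · exact GluesTo.of_mem hvC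
    set C₀ := C.filter fun r => ¬ Dich c r v
    have hsub : C₀ ⊆ C := Finset.filter_subset _ _
    have hC₀ : IsCode c C₀ := hC.mono hsub
    have hcov₀ : Covers c C₀ v := hcov.filter_not_dich hc
    have hnd : ∀ r ∈ C₀, ¬ Dich c r v := fun r hr => (Finset.mem_filter.1 hr).2
    have ih₀ : ∀ (D : Finset (Fin d → S)) (u : Fin d → S), D.card < C₀.card → IsCode c D →
        Covers c D u → GluesTo c D u := fun D u hD hDC hDu =>
      have hlt := hD.trans_le (Finset.card_le_card hsub)
      ih _ hlt hDC hDu (hlt.le.trans hcard) rfl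
    refine GluesTo.mono ?_ hsub
    obtain ⟨p, hp⟩ := hcov₀.nonempty hc
    obtain ⟨k, hpv⟩ : ∃ k, p k ≠ v k := Function.ne_iff.1 fun h => hvC (h ▸ hsub hp)
    obtain ⟨x, hxp, hxv⟩ := exists_mem_of_not_dich hc (hnd p hp)
    obtain ⟨q, hq, -, hqp⟩ := hC₀.exists_lineMeets_compl_of_covers hc hcov₀ hp hpv
      (fun j _ => hxp j) fun j _ => hxv j
    have hpv' : p k ≠ c (v k) := fun h => hnd p hp ⟨k, h⟩
    have hqv : q k ≠ v k := fun h => hpv' (by rw [← h, hqp, hc.involutive])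
    by_cases hp₁ : ∀ r ∈ C₀, r k = p k → r = p
    · exact hC₀.gluesTo_of_forall_eq hc hcov₀ hnd hp hpv hp₁ ih₀
    by_cases hq₁ : ∀ r ∈ C₀, r k = q k → r = q
    · exact hC₀.gluesTo_of_forall_eq hc hcov₀ hnd hq hqv hq₁ ih₀
    push Not at hp₁ hq₁
    obtain ⟨p', hp', hpp', hne⟩ := hp₁
    obtain ⟨q', hq', hqq', hne'⟩ := hq₁
    refine hC₀.gluesTo_of_forall_eq_or_eq_compl hc hcov₀ hpv hpv' ?_ ih₀
    refine forall_eq_or_eq_of_card_le_four (f := fun r => r k)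
      ((Finset.card_le_card hsub).trans hcard) (hc.ne_self (p k)).symm ?_ ?_
    · exact Finset.one_lt_card.2 ⟨p', by simp [*], p, by simp [*], hne⟩
    · exact Finset.one_lt_card.2 ⟨q', by simp [*], q, by simp [*], hne'⟩

end SmallCovers

section FourLetters

variable {a b : S}

theorem finite_of_four_letters (hS : ∀ s, s = a ∨ s = c a ∨ s = b ∨ s = c b) : Finite S :=
  Set.finite_univ_iff.1 ((Set.toFinite {a, c a, b, c b}).subset fun s _ => hS s)

theorem eq_of_ne_of_ne_compl (hc : IsComplementation c)
    (hS : ∀ s, s = a ∨ s = c a ∨ s = b ∨ s = c b) (hsa : s ≠ a) (hsa' : s ≠ c a) (hta : t ≠ a)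
    (hta' : t ≠ c a) (hst : s ≠ c t) : s = t := by
  have hs := ((hS s).resolve_left hsa).resolve_left hsa'
  have ht := ((hS t).resolve_left hta).resolve_left hta'
  have hcb := hc.involutive b
  grind

variable [DecidableEq S]

theorem filter_ne_eq_union (hc : IsComplementation c)
    (hS : ∀ s, s = a ∨ s = c a ∨ s = b ∨ s = c b) (hba : b ≠ a) (hba' : b ≠ c a) :
    (V.filter fun v => v i ≠ a) = (V.filter fun v => v i = c a) ∪ (V.filter fun v => v i = b) ∪
      V.filter fun v => v i = c b := by
  rw [← Finset.filter_or, ← Finset.filter_or]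
  refine Finset.filter_congr fun v _ => ?_
  have hcba : c b ≠ a := fun h => hba' (by rw [← h, hc.involutive])
  have hvi := hS (v i)
  have hca := hc.ne_self a
  grind

end FourLetters

section Density

variable {a b : S}

theorem IsCode.ne_of_not_dich_of_forall_ne_compl (hc : IsComplementation c) (hW : IsCode c W)
    (hcov : Covers c W v) (hva : v i ≠ a) (hWa : ∀ w ∈ W, w i ≠ c a) (hw : w ∈ W)
    (hwv : ¬ Dich c w v) : w i ≠ a := by
  rintro rfl
  obtain ⟨x, hxw, hxv⟩ := exists_mem_of_not_dich hc hwv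
  obtain ⟨q, hq, -, hqi⟩ := hW.exists_lineMeets_compl_of_covers hc hcov hw hva.symm
    (fun j _ => hxw j) fun j _ => hxv j
  exact hWa q hq hqi

variable [DecidableEq S]

theorem delta_le_card {U : Finset (Fin d → S)} (hw : w ∈ W)
    (h : ∀ v ∈ V, ¬ Dich c v w → v ∈ U) : delta c V W ≤ U.card := by
  refine (Finset.inf_le hw).trans (Nat.cast_le.2 (Finset.card_le_card fun v hv => ?_))
  obtain ⟨hvV, hvw⟩ := Finset.mem_filter.1 hv
  exact h v hvV hvw

theorem delta_le_card_filter_ne_of_eq_compl (hc : IsComplementation c) (hw : w ∈ W)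
    (hwi : w i = c a) : delta c V W ≤ (V.filter fun v => v i ≠ a).card :=
  delta_le_card hw fun v hv hvw => Finset.mem_filter.2 ⟨hv, fun hva =>
    hvw ⟨i, by rw [hva, hwi, hc.involutive]⟩⟩

theorem IsCode.delta_le_card_filter_ne (hc : IsComplementation c)
    (hS : ∀ s, s = a ∨ s = c a ∨ s = b ∨ s = c b) (hW : IsCode c W)
    (hWV : ∀ w ∈ W, Covers c V w) (hv : v ∈ V) (hcov : Covers c W v) (hva : v i ≠ a)
    (hva' : v i ≠ c a) (hWa : ∀ w ∈ W, w i ≠ c a) :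
    delta c W V ≤ (V.filter fun v => v i ≠ a).card := by
  have := finite_of_four_letters hS
  have hsub : ∀ w ∈ W, ¬ Dich c w v → w ∈ W.filter fun w => w i = v i := by
    intro w hw hwv
    have hwa := hW.ne_of_not_dich_of_forall_ne_compl hc hcov hva hWa hw hwv
    exact Finset.mem_filter.2 ⟨hw,
      eq_of_ne_of_ne_compl hc hS hwa (hWa w hw) hva hva' fun h => hwv ⟨i, h⟩⟩
  exact (delta_le_card hv hsub).trans (Nat.cast_le.2 (hW.card_filter_eq_le hc hWV i hva))

theorem IsCode.exists_gc_mem_of_eq_compl (hc : IsComplementation c)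
    (hS : ∀ s, s = a ∨ s = c a ∨ s = b ∨ s = c b) (hba : b ≠ a) (hba' : b ≠ c a)
    (hW : IsCode c W) (hWV : ∀ w ∈ W, Covers c V w)
    (hle : (V.filter fun v => v i ≠ a).card ≤ 4) (hcov : Covers c W v) (hva : v i = c a)
    (hWa : ∀ w ∈ W, w i ≠ c a) : ∃ W', GC c W W' ∧ v ∈ W' := by
  have := finite_of_four_letters hS
  have hcba : c b ≠ a := fun h => hba' (by rw [← h, hc.involutive])
  have hglue : ∀ t, t ≠ a → t ≠ c a →
      GluesTo c (W.filter fun w => w i = t) (Function.update v i t) := by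
    intro t hta hta'
    obtain ⟨B, haB, htB⟩ := exists_selector_mem_mem hc (hc.involutive.injective.ne hta.symm)
    have hcovt := hcov.filter_update (s := t) (hva ▸ haB) fun w hw hwB =>
      eq_of_ne_of_ne_compl hc hS (fun h => B.compl_mem_iff.1 haB (h ▸ hwB)) (hWa w hw) hta hta'
        fun h => B.compl_mem_iff.1 (h ▸ hwB) htB
    exact (hW.mono (Finset.filter_subset _ _)).gluesTo_of_card_le_four hc hcovt
      ((hW.card_filter_eq_le hc hWV i hta).trans hle)
  have hdisj : Disjoint (W.filter fun w => w i = b) (W.filter fun w => w i = c b) :=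
    Finset.disjoint_filter.2 fun w _ h h' => hc.ne_self b (h' ▸ h)
  obtain ⟨W', hWW', hv, -⟩ := ((hglue b hba hba').of_halves hc
    (hglue (c b) hcba (hc.involutive.injective.ne hba)) hdisj).exists_gc W hW
    (Finset.union_subset (Finset.filter_subset _ _) (Finset.filter_subset _ _))
  exact ⟨W', hWW', hv⟩

theorem flat_like_code_low_common_density_general (hc : IsComplementation c)
    (hS : ∀ s, s = a ∨ s = c a ∨ s = b ∨ s = c b) (hba : b ≠ a) (hba' : b ≠ c a)
    (hW : IsCode c W) (hne : (V.filter fun v => v i ≠ a).Nonempty)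
    (hle : (V.filter fun v => v i ≠ a).card ≤ 4) (heq : Equivalent c V W) :
    ∃ W', GC c W W' ∧ min (delta c V W') (delta c W' V) ≤ (V.filter fun v => v i ≠ a).card := by
  have hVW : ∀ v ∈ V, Covers c W v := fun v hv => (heq.1 v hv).covers hc
  have hWV : ∀ w ∈ W, Covers c V w := fun w hw => (heq.2 w hw).covers hc
  obtain ⟨v, hv⟩ := hne
  obtain ⟨hvV, hva⟩ := Finset.mem_filter.1 hv
  by_cases hWa : ∃ w ∈ W, w i = c a
  · obtain ⟨w, hw, hwa⟩ := hWa
    exact ⟨W, Relation.ReflTransGen.refl,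
      min_le_of_left_le (delta_le_card_filter_ne_of_eq_compl hc hw hwa)⟩
  push Not at hWa
  by_cases hva' : v i = c a
  · obtain ⟨W', hWW', hvW'⟩ :=
      hW.exists_gc_mem_of_eq_compl hc hS hba hba' hWV hle (hVW v hvV) hva' hWa
    exact ⟨W', hWW', min_le_of_left_le (delta_le_card_filter_ne_of_eq_compl hc hvW' hva')⟩
  · exact ⟨W, Relation.ReflTransGen.refl, min_le_of_right_le
      (hW.delta_le_card_filter_ne hc hS hWV hvV (hVW v hvV) hva hva' hWa)⟩

end Density

/-- Lemma "fla" of the paper. -/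
theorem flat_like_code_low_common_density
    {S : Type} [Fintype S] [DecidableEq S] (c : S → S)
    (hc : ∀ s, c (c s) = s) (hc' : ∀ s, c s ≠ s)
    (a b : S) (hS : ∀ s : S, s = a ∨ s = c a ∨ s = b ∨ s = c b)
    (hba : b ≠ a) (hba' : b ≠ c a) {d : ℕ}
    (V W : Finset (Fin d → S)) (hV : IsCode c V) (hW : IsCode c W) (i : Fin d)
    (hne : ((V.filter fun v => v i = c a) ∪ (V.filter fun v => v i = b) ∪
      (V.filter fun v => v i = c b)).Nonempty)
    (hle : (V.filter fun v => v i = c a).card + (V.filter fun v => v i = b).card +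
      (V.filter fun v => v i = c b).card ≤ 4)
    (hWne : W.Nonempty) (heq : Equivalent c V W) :
    ∃ W' : Finset (Fin d → S), GC c W W' ∧
      min (delta c V W') (delta c W' V) ≤ 4 := by
  have hcompl : IsComplementation c := ⟨hc, hc'⟩
  have hunion := filter_ne_eq_union (V := V) (i := i) hcompl hS hba hba'
  have hcard : (V.filter fun v => v i ≠ a).card ≤ 4 := by
    rw [hunion]
    exact (Finset.card_union_le _ _).trans
      ((Nat.add_le_add_right (Finset.card_union_le _ _) _).trans hle)
  obtain ⟨W', hWW', hΔ⟩ := flat_like_code_low_common_density_general hcompl hS hba hba' hW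
    (hunion ▸ hne) hcard heq
  exact ⟨W', hWW', hΔ.trans (by exact_mod_cast hcard)⟩

end PolyboxPaper
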